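/- Let I be the ideal of R = ℚ[x,y,z] generated by z³, yz², x²yz, x³y, x⁴, xy⁴, y⁵z, y⁶. Then I has height 3, the minimal number of generators of I is 8, and the quotient ring R/I is a finite-dimensional ℚ-vector space. -/

import Mathlib

/-!
The ideal `I` is a monomial ideal, so membership is read off from the supports of polynomials.

*Height.* `I` contains powers of `x`, `y` and `z`, so the only prime containing it is
`(x, y, z)`. Its height is at most `dim ℚ[x,y,z] = 3`, and the chain
`0 < (x) < (x, y) < (x, y, z)` shows that it is at least `3`. The members of the chain are
realized as kernels of the substitutions `killVars k` that set the first `k` variables to zero.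

*Number of generators.* The eight exponents form an antichain for divisibility. Hence, for `f ∈ I`
and any `a`, the coefficient of `a * f` at one of these exponents is `a(0)` times that of `f`
(`coeff_mul_of_mem`). So if `s` generates `I`, the vectors of these coefficients of the elements of
`s` span the image of `I` in `ℚ⁸` (this map is the quotient `I → I / 𝔪 I`), which is everything;
therefore `s` has at least eight elements.

*Finiteness.* `R / I` is a finitely generated algebra whose generators are nilpotent, hence
integral over `ℚ`, so it is a finite `ℚ`-module.
-/

open MvPolynomial

/-- The height of an ideal: the infimum of the heights of prime ideals containing it. -/
noncomputable def idealHeight {R : Type*} [CommRing R] (I : Ideal R) : ℕ∞ :=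
  ⨅ p ∈ {p : PrimeSpectrum R | I ≤ p.asIdeal}, Order.height p

/-- The minimal number of generators of an ideal: the smallest cardinality of a
set of elements of the ring generating it as an ideal. -/
noncomputable def minNumGens {R : Type*} [CommRing R] (I : Ideal R) : ℕ :=
  sInf {n : ℕ | ∃ s : Finset R, s.card = n ∧ Ideal.span (s : Set R) = I}

noncomputable abbrev x : MvPolynomial (Fin 3) ℚ := X 0
noncomputable abbrev y : MvPolynomial (Fin 3) ℚ := X 1
noncomputable abbrev z : MvPolynomial (Fin 3) ℚ := X 2


/-- The exponents of the eight monomial generators, as functions. -/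
def genExpFun : Fin 8 → Fin 3 → ℕ :=
  ![![0,0,3], ![0,1,2], ![2,1,1], ![3,1,0], ![4,0,0], ![1,4,0], ![0,5,1], ![0,6,0]]

/-- The exponents of the eight monomial generators, as finitely supported functions. -/
noncomputable def genExp (i : Fin 8) : Fin 3 →₀ ℕ :=
  Finsupp.equivFunOnFinite.symm (genExpFun i)

lemma genExp_antichain {i j : Fin 8} (h : genExp i ≤ genExp j) : i = j := by
  have h' : ∀ k, genExpFun i k ≤ genExpFun j k := fun k => h k
  have key : ∀ i j : Fin 8, (∀ k, genExpFun i k ≤ genExpFun j k) → i = j := by decide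
  exact key i j h'

lemma monomial_eq_prod (s : Fin 3 →₀ ℕ) :
    (monomial s 1 : MvPolynomial (Fin 3) ℚ) = x ^ s 0 * y ^ s 1 * z ^ s 2 := by
  rw [monomial_eq, Finsupp.prod_fintype _ _ (by simp)]
  simp [Fin.prod_univ_three]

lemma gens_eq : ({z^3, y*z^2, x^2*y*z, x^3*y, x^4, x*y^4, y^5*z, y^6} :
    Set (MvPolynomial (Fin 3) ℚ)) = (fun s => monomial s (1 : ℚ)) '' Set.range genExp := by
  rw [← Set.range_comp]
  ext p
  simp only [Set.mem_range, Function.comp, monomial_eq_prod, genExp, Fin.exists_fin_succ,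
    Set.mem_insert_iff, Set.mem_singleton_iff, genExpFun]
  simp [eq_comm]

/-- The ideal of the theorem. -/
noncomputable def genIdeal : Ideal (MvPolynomial (Fin 3) ℚ) :=
  Ideal.span ((fun s => monomial s (1 : ℚ)) '' Set.range genExp)

lemma monomial_mem_genIdeal (i : Fin 8) : monomial (genExp i) (1 : ℚ) ∈ genIdeal :=
  Ideal.subset_span ⟨_, ⟨i, rfl⟩, rfl⟩

lemma X_pow_mem_genIdeal (i : Fin 3) : (X i : MvPolynomial (Fin 3) ℚ) ^ 6 ∈ genIdeal := by
  have hx : x ^ 4 ∈ genIdeal := by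
    simpa [monomial_eq_prod, genExp, genExpFun] using monomial_mem_genIdeal 4
  have hy : y ^ 6 ∈ genIdeal := by
    simpa [monomial_eq_prod, genExp, genExpFun] using monomial_mem_genIdeal 7
  have hz : z ^ 3 ∈ genIdeal := by
    simpa [monomial_eq_prod, genExp, genExpFun] using monomial_mem_genIdeal 0
  fin_cases i
  · exact Ideal.pow_mem_of_pow_mem _ hx (show 4 ≤ 6 by norm_num)
  · exact hy
  · exact Ideal.pow_mem_of_pow_mem _ hz (show 3 ≤ 6 by norm_num)

/-! ### Finite dimensionality -/

lemma finite_quotient : FiniteDimensional ℚ (MvPolynomial (Fin 3) ℚ ⧸ genIdeal) := by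
  have : Algebra.IsIntegral ℚ (MvPolynomial (Fin 3) ℚ ⧸ genIdeal) := by
    refine ⟨fun q => ?_⟩
    obtain ⟨p, rfl⟩ := Ideal.Quotient.mk_surjective q
    induction p using MvPolynomial.induction_on with
    | C a => exact isIntegral_algebraMap (R := ℚ) (x := a)
    | add p q hp hq => rw [map_add]; exact hp.add hq
    | mul_X p i hp =>
      rw [map_mul]
      refine hp.mul (IsIntegral.of_pow (n := 6) (by norm_num) ?_)
      rw [← map_pow, Ideal.Quotient.eq_zero_iff_mem.mpr (X_pow_mem_genIdeal i)]
      exact isIntegral_zero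
  exact Algebra.IsIntegral.finite

/-! ### Height -/

/-- The substitution setting the variables of index less than `k` to zero. -/
noncomputable def killVars (k : ℕ) : MvPolynomial (Fin 3) ℚ →ₐ[ℚ] MvPolynomial (Fin 3) ℚ :=
  aeval fun i => if (i : ℕ) < k then 0 else X i

/-- The prime ideal generated by the variables of index less than `k`, as a kernel. -/
noncomputable def chainPrime (k : ℕ) : PrimeSpectrum (MvPolynomial (Fin 3) ℚ) :=
  ⟨RingHom.ker (killVars k), RingHom.ker_isPrime _⟩

lemma killVars_comp {k l : ℕ} (h : k ≤ l) : (killVars l).comp (killVars k) = killVars l := by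
  ext1 i
  by_cases hk : (i : ℕ) < k
  · simp [killVars, hk, hk.trans_le h]
  · simp [killVars, hk]

lemma chainPrime_lt {k : ℕ} (hk : k < 3) : chainPrime k < chainPrime (k + 1) := by
  refine lt_of_le_not_ge ?_ ?_
  · intro p hp
    change killVars k p = 0 at hp
    change killVars (k + 1) p = 0
    rw [← killVars_comp k.le_succ, AlgHom.comp_apply, hp, map_zero]
  · intro h
    have h1 : (X ⟨k, hk⟩ : MvPolynomial (Fin 3) ℚ) ∈ (chainPrime (k + 1)).asIdeal := by
      change killVars (k + 1) _ = 0
      simp [killVars]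
    have h2 : killVars k (X ⟨k, hk⟩) = 0 := h h1
    simp [killVars] at h2

lemma killVars_three (p : MvPolynomial (Fin 3) ℚ) : killVars 3 p = C (constantCoeff p) := by
  have : (fun i : Fin 3 => if (i : ℕ) < 3 then (0 : MvPolynomial (Fin 3) ℚ) else X i) = 0 := by
    ext1 i; simp
  rw [killVars, this, aeval_zero]
  rfl

lemma genIdeal_le_chainPrime : genIdeal ≤ (chainPrime 3).asIdeal := by
  rw [genIdeal, Ideal.span_le]
  rintro _ ⟨_, ⟨i, rfl⟩, rfl⟩
  change killVars 3 _ = 0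
  have h0 : genExp i ≠ 0 := by
    intro h
    have h' : ∀ k, genExpFun i k = 0 := fun k => DFunLike.congr_fun h k
    have key : ∀ i : Fin 8, ¬ ∀ k, genExpFun i k = 0 := by decide
    exact key i h'
  simp [killVars_three, constantCoeff_monomial, h0]

/-- A prime containing `I` contains the variables, hence every polynomial without constant term. -/
lemma chainPrime_le_of_genIdeal_le (p : PrimeSpectrum (MvPolynomial (Fin 3) ℚ))
    (hp : genIdeal ≤ p.asIdeal) : chainPrime 3 ≤ p := by
  have hX : ∀ i, (X i : MvPolynomial (Fin 3) ℚ) ∈ p.asIdeal := fun i =>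
    p.isPrime.mem_of_pow_mem 6 (hp (X_pow_mem_genIdeal i))
  intro f hf
  have h0 : C (constantCoeff f) = (0 : MvPolynomial (Fin 3) ℚ) := by
    rw [← killVars_three]; exact hf
  have key : ∀ g : MvPolynomial (Fin 3) ℚ, g - C (constantCoeff g) ∈ p.asIdeal := by
    intro g
    induction g using MvPolynomial.induction_on with
    | C a => simp
    | add a b ha hb =>
      have := p.asIdeal.add_mem ha hb
      rw [map_add, C_add]
      convert this using 1
      ring
    | mul_X a i _ => simpa using p.asIdeal.mul_mem_left a (hX i)
  simpa [h0] using key f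

lemma height_chainPrime : Order.height (chainPrime 3) = 3 := by
  apply le_antisymm
  · have h := Order.height_le_krullDim (chainPrime 3)
    have hd : Order.krullDim (PrimeSpectrum (MvPolynomial (Fin 3) ℚ)) = 3 := by
      change ringKrullDim _ = 3
      simp [MvPolynomial.ringKrullDim_of_isNoetherianRing]
    rw [hd] at h
    exact WithBot.coe_le_coe.mp h
  · have h0 := Order.height_add_one_le (chainPrime_lt (k := 0) (by norm_num))
    have h1 := Order.height_add_one_le (chainPrime_lt (k := 1) (by norm_num))
    have h2 := Order.height_add_one_le (chainPrime_lt (k := 2) (by norm_num))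
    calc (3 : ℕ∞) = 0 + 1 + 1 + 1 := by norm_num
      _ ≤ Order.height (chainPrime 0) + 1 + 1 + 1 := by gcongr; exact zero_le
      _ ≤ Order.height (chainPrime 1) + 1 + 1 := by gcongr
      _ ≤ Order.height (chainPrime 2) + 1 := by gcongr
      _ ≤ _ := h2

lemma idealHeight_genIdeal : idealHeight genIdeal = 3 := by
  apply le_antisymm
  · rw [← height_chainPrime]
    exact iInf₂_le_of_le (chainPrime 3) genIdeal_le_chainPrime le_rfl
  · unfold idealHeight
    refine le_iInf₂ fun p hp => ?_
    rw [← height_chainPrime]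
    exact Order.height_mono (chainPrime_le_of_genIdeal_le p hp)

/-! ### Minimal number of generators -/

/-- The coefficients of a polynomial at the eight exponents of the generators. -/
noncomputable def genCoeffs : MvPolynomial (Fin 3) ℚ →ₗ[ℚ] (Fin 8 → ℚ) :=
  LinearMap.pi fun i => lcoeff ℚ (genExp i)

lemma genCoeffs_apply (f : MvPolynomial (Fin 3) ℚ) (i : Fin 8) :
    genCoeffs f i = coeff (genExp i) f := rfl

/-- A proper divisor of a generator is divisible by no generator, so the coefficients of `f ∈ I` at
proper divisors vanish and only one term of the convolution survives. -/
lemma coeff_mul_of_mem {f : MvPolynomial (Fin 3) ℚ} (hf : f ∈ genIdeal)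
    (a : MvPolynomial (Fin 3) ℚ) (i : Fin 8) :
    coeff (genExp i) (a * f) = constantCoeff a * coeff (genExp i) f := by
  classical
  rw [coeff_mul, Finset.sum_eq_single (0, genExp i)]
  · rfl
  · rintro ⟨u, v⟩ huv hne
    rw [Finset.HasAntidiagonal.mem_antidiagonal] at huv
    by_contra hnz
    have hv : v ∈ f.support := mem_support_iff.mpr (right_ne_zero_of_mul hnz)
    obtain ⟨_, ⟨j, rfl⟩, hj⟩ := mem_ideal_span_monomial_image.mp hf v hv
    have hvi : v ≤ genExp i := huv ▸ le_add_self
    obtain rfl := genExp_antichain (hj.trans hvi)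
    obtain rfl := le_antisymm hvi hj
    exact hne (by simpa using huv)
  · intro h
    simp at h

lemma genCoeffs_monomial (i : Fin 8) :
    genCoeffs (monomial (genExp i) 1) = Pi.single i 1 := by
  classical
  ext j
  rw [genCoeffs_apply, coeff_monomial, Pi.single_apply]
  refine if_congr ⟨fun h => (genExp_antichain h.le).symm, fun h => h ▸ rfl⟩ rfl rfl

lemma eight_le_card {s : Finset (MvPolynomial (Fin 3) ℚ)}
    (hs : Ideal.span (s : Set (MvPolynomial (Fin 3) ℚ)) = genIdeal) : 8 ≤ s.card := by
  classical
  have key : ∀ f ∈ Ideal.span (s : Set (MvPolynomial (Fin 3) ℚ)),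
      genCoeffs f ∈ Submodule.span ℚ ((s.image genCoeffs : Finset _) : Set (Fin 8 → ℚ)) := by
    intro f hf
    induction hf using Submodule.span_induction with
    | mem f hf => exact Submodule.subset_span (Finset.mem_image_of_mem _ hf)
    | zero => simp
    | add f g _ _ hf hg => rw [map_add]; exact add_mem hf hg
    | smul a f hf ih =>
      have : genCoeffs (a • f) = constantCoeff a • genCoeffs f := by
        ext i
        exact coeff_mul_of_mem (hs ▸ hf) a i
      rw [this]
      exact Submodule.smul_mem _ _ ih
  have htop : Submodule.span ℚ ((s.image genCoeffs : Finset _) : Set (Fin 8 → ℚ)) = ⊤ := by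
    rw [eq_top_iff, ← (Pi.basisFun ℚ (Fin 8)).span_eq, Submodule.span_le]
    rintro _ ⟨i, rfl⟩
    rw [Pi.basisFun_apply, ← genCoeffs_monomial]
    exact key _ (hs ▸ monomial_mem_genIdeal i)
  have hcard := finrank_span_finset_le_card (R := ℚ) (s.image genCoeffs)
  rw [Set.finrank, htop, finrank_top, Module.finrank_fin_fun] at hcard
  exact hcard.trans Finset.card_image_le

lemma minNumGens_genIdeal : minNumGens genIdeal = 8 := by
  classical
  have hmem : ∃ s : Finset (MvPolynomial (Fin 3) ℚ), s.card = 8 ∧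
      Ideal.span (s : Set (MvPolynomial (Fin 3) ℚ)) = genIdeal := by
    have hspan : Ideal.span ((Finset.univ.image fun i => monomial (genExp i) (1 : ℚ) :
        Finset (MvPolynomial (Fin 3) ℚ)) : Set (MvPolynomial (Fin 3) ℚ)) = genIdeal := by
      rw [genIdeal, ← Set.range_comp]
      simp [Function.comp_def]
    refine ⟨_, le_antisymm ?_ (eight_le_card hspan), hspan⟩
    exact Finset.card_image_le
  apply le_antisymm
  · exact Nat.sInf_le hmem
  · refine le_csInf ⟨8, hmem⟩ ?_
    rintro _ ⟨s, rfl, hs⟩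
    exact eight_le_card hs

theorem stmt_19 (I : Ideal (MvPolynomial (Fin 3) ℚ))
    (hI : I = Ideal.span {z^3, y*z^2, x^2*y*z, x^3*y, x^4, x*y^4, y^5*z, y^6}) :
    idealHeight I = 3 ∧ minNumGens I = 8 ∧
    FiniteDimensional ℚ (MvPolynomial (Fin 3) ℚ ⧸ I) := by
  rw [gens_eq] at hI
  change I = genIdeal at hI
  subst hI
  exact ⟨idealHeight_genIdeal, minNumGens_genIdeal, finite_quotient⟩
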